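/- Let P be a plurisubharmonic, non-pluriharmonic real polynomial on C² that is homogeneous of degree 2k (k ≥ 1 an integer). Then there are at most finitely many complex lines passing through the origin of C² along which P is harmonic; equivalently, the set {ζ ∈ C : the function w ↦ P(ζw, w) is harmonic on C} ∪ {∞ if w ↦ P(w, 0) is harmonic} is finite. -/

import Mathlib

/-!
Averaging `P` over rotations `z ↦ ω z` isolates its parts `S j` of bidegree `(j, j)`. If `S m` is
the first nonzero one with `m > 0`, then it is plurisubharmonic, it is nonnegative because its Levi
form at `z` in the direction `z` is `m² S m`, and it vanishes on every line along which `P` is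
harmonic. Suppose there are `3m + 1` such lines, and let `E` be the product of the linear forms
defining them. Then `(S m)³ |z|² / |E|²` is homogeneous of degree `0` and extends continuously by
`0` to the lines, so it has a maximum. The kernel of the complex-linear form whose real part is
the derivative of `S m` at the maximum point gives a complex direction in which `log (S m)` has
nonnegative Laplacian, `log |z|²` has positive Laplacian and `log |E|` is harmonic: this
contradicts the maximum. Hence all `S j` with `j > 0` vanish, the Levi forms of the rotations of
`P` sum to zero, and `P` is pluriharmonic.
-/

open Complex ComplexConjugate Metric Set

noncomputable section

/-- Wirtinger derivative `∂f` in the complex direction `e`. -/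
def wd (f : ℂ × ℂ → ℂ) (e : ℂ × ℂ) (z : ℂ × ℂ) : ℂ :=
  (1 / 2) * (fderiv ℝ f z e - Complex.I * fderiv ℝ f z (Complex.I • e))

/-- Conjugate Wirtinger derivative `∂̄f` in the complex direction `e`. -/
def wdbar (f : ℂ × ℂ → ℂ) (e : ℂ × ℂ) (z : ℂ × ℂ) : ℂ :=
  (1 / 2) * (fderiv ℝ f z e + Complex.I * fderiv ℝ f z (Complex.I • e))

/-- Mixed second derivative `∂²P/∂z_(ej)∂z̄_(ek)` of a real-valued function. -/
def mixedDeriv (P : ℂ × ℂ → ℝ) (ej ek : ℂ × ℂ) (z : ℂ × ℂ) : ℂ :=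
  wd (wdbar (fun w => (P w : ℂ)) ek) ej z

/-- The Levi form of `P` at `z` in the direction `v`. -/
def leviForm (P : ℂ × ℂ → ℝ) (z v : ℂ × ℂ) : ℂ :=
  mixedDeriv P (1, 0) (1, 0) z * v.1 * conj v.1 +
  mixedDeriv P (1, 0) (0, 1) z * v.1 * conj v.2 +
  mixedDeriv P (0, 1) (1, 0) z * v.2 * conj v.1 +
  mixedDeriv P (0, 1) (0, 1) z * v.2 * conj v.2

/-- `P` is plurisubharmonic on all of `ℂ²`. -/
def IsPsh (P : ℂ × ℂ → ℝ) : Prop := ∀ z v, 0 ≤ (leviForm P z v).re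

/-- `P` is strictly plurisubharmonic at `z`. -/
def IsStrictPshAt (P : ℂ × ℂ → ℝ) (z : ℂ × ℂ) : Prop :=
  ∀ v, v ≠ 0 → 0 < (leviForm P z v).re

/-- The Levi-degeneracy set of `P`. -/
def leviDegen (P : ℂ × ℂ → ℝ) : Set (ℂ × ℂ) :=
  {z | ¬ IsStrictPshAt P z}

/-- One-variable Wirtinger derivative. -/
def wd1 (f : ℂ → ℂ) (z : ℂ) : ℂ :=
  (1 / 2) * (fderiv ℝ f z 1 - Complex.I * fderiv ℝ f z Complex.I)

def wdbar1 (f : ℂ → ℂ) (z : ℂ) : ℂ :=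
  (1 / 2) * (fderiv ℝ f z 1 + Complex.I * fderiv ℝ f z Complex.I)

/-- The Laplacian of a function on `ℂ`, as `4 ∂∂̄`. -/
def lap (u : ℂ → ℝ) (z : ℂ) : ℂ := 4 * wd1 (wdbar1 fun w => (u w : ℂ)) z

def IsHarmonic (u : ℂ → ℝ) : Prop := ∀ z, lap u z = 0

def Subharmonic (u : ℂ → ℝ) : Prop := ∀ z, 0 ≤ (lap u z).re

/-- The Laplacian of a function on `ℂ² ≅ ℝ⁴`. -/
def lap2 (P : ℂ × ℂ → ℝ) (z : ℂ × ℂ) : ℂ :=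
  4 * (mixedDeriv P (1, 0) (1, 0) z + mixedDeriv P (0, 1) (0, 1) z)

/-- `P` is a real-valued polynomial in `z₁, z̄₁, z₂, z̄₂`. -/
def IsRealPoly2 (P : ℂ × ℂ → ℝ) : Prop :=
  ∃ Q : MvPolynomial (Fin 4) ℂ,
    ∀ z : ℂ × ℂ, (P z : ℂ) = MvPolynomial.eval ![z.1, conj z.1, z.2, conj z.2] Q

/-- `u` is a real-valued polynomial in `z, z̄`. -/
def IsRealPoly1 (u : ℂ → ℝ) : Prop :=
  ∃ Q : MvPolynomial (Fin 2) ℂ,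
    ∀ z : ℂ, (u z : ℂ) = MvPolynomial.eval ![z, conj z] Q

/-- `F` is a holomorphic polynomial map on `ℂ²`. -/
def IsPolyMap2 (F : ℂ × ℂ → ℂ) : Prop :=
  ∃ Q : MvPolynomial (Fin 2) ℂ, ∀ z : ℂ × ℂ, F z = MvPolynomial.eval ![z.1, z.2] Q

/-- `P` has no pluriharmonic terms: in its (unique) monomial expansion in
`z₁, z̄₁, z₂, z̄₂` every monomial involves both a conjugated and an
unconjugated variable. Indexing: `0 ↦ z₁`, `1 ↦ z̄₁`, `2 ↦ z₂`, `3 ↦ z̄₂`. -/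
def NoPluriharmonicTerms (P : ℂ × ℂ → ℝ) : Prop :=
  ∃ Q : MvPolynomial (Fin 4) ℂ,
    (∀ z : ℂ × ℂ, (P z : ℂ) = MvPolynomial.eval ![z.1, conj z.1, z.2, conj z.2] Q) ∧
    ∀ m ∈ Q.support, (m 1 ≠ 0 ∨ m 3 ≠ 0) ∧ (m 0 ≠ 0 ∨ m 2 ≠ 0)

/-- `P` is pluriharmonic: the real part of an entire function. -/
def IsPluriharmonic (P : ℂ × ℂ → ℝ) : Prop :=
  ∃ f : ℂ × ℂ → ℂ, Differentiable ℂ f ∧ ∀ z, P z = (f z).re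

/-- `P` is homogeneous of degree `d`. -/
def HomogeneousDeg (P : ℂ × ℂ → ℝ) (d : ℕ) : Prop :=
  ∀ t : ℝ, 0 < t → ∀ z : ℂ × ℂ, P (t • z) = t ^ d * P z

/-- The directions `ζ` such that `P` is harmonic along the line `{(ζw, w)}`. -/
def harmDirs (P : ℂ × ℂ → ℝ) : Set ℂ := {ζ | IsHarmonic fun w => P (ζ * w, w)}

/-- The union of all complex lines through `0` along which `P` is harmonic. -/
def linesUnion (P : ℂ × ℂ → ℝ) : Set (ℂ × ℂ) :=
  {z | (∃ ζ ∈ harmDirs P, z.1 = ζ * z.2) ∨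
       (IsHarmonic (fun w => P (w, 0)) ∧ z.2 = 0)}

/-- `P` is harmonic along the smooth part of the set `V`: for every injective
holomorphic parametrization by the unit disc of a piece of `V`, the pullback
of `P` is harmonic. -/
def HarmonicAlong (P : ℂ × ℂ → ℝ) (V : Set (ℂ × ℂ)) : Prop :=
  ∀ φ : ℂ → ℂ × ℂ, DifferentiableOn ℂ φ (Metric.ball 0 1) →
    Set.InjOn φ (Metric.ball 0 1) → φ '' Metric.ball 0 1 ⊆ V →
    ∀ ζ ∈ Metric.ball (0 : ℂ) 1, lap (fun w => P (φ w)) ζ = 0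

/-- `S` contains no complex-analytic subvariety of positive dimension. -/
def NoPosDimVariety (S : Set (ℂ × ℂ)) : Prop :=
  ∀ φ : ℂ → ℂ × ℂ, DifferentiableOn ℂ φ (Metric.ball 0 1) →
    φ '' Metric.ball 0 1 ⊆ S →
    ∀ x ∈ Metric.ball (0 : ℂ) 1, ∀ y ∈ Metric.ball (0 : ℂ) 1, φ x = φ y

/-- Property (A) for a homogeneous polynomial `P`. -/
def PropertyA (P : ℂ × ℂ → ℝ) : Prop :=
  NoPosDimVariety (leviDegen P \ linesUnion P) ∧
  ∃ W : Set (ℂ × ℂ), IsClosed W ∧ (∀ z ∈ W, ∀ t : ℝ, 0 < t → t • z ∈ W) ∧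
    leviDegen P \ linesUnion P ⊆ W ∧ interior W ∩ linesUnion P = ∅

/-- Property (B): there is an entire function all of whose level curves have
smooth part along which `P` is harmonic. -/
def PropertyB (P : ℂ × ℂ → ℝ) : Prop :=
  ∃ H : ℂ × ℂ → ℂ, Differentiable ℂ H ∧ ∀ c : ℂ, HarmonicAlong P (H ⁻¹' {c})

/-- The anisotropic dilation `(t^{1/m₁}z₁, t^{1/m₂}z₂)`. -/
def wdil (m₁ m₂ : ℕ) (t : ℝ) (z : ℂ × ℂ) : ℂ × ℂ :=
  (((t ^ ((m₁ : ℝ)⁻¹) : ℝ) : ℂ) * z.1, ((t ^ ((m₂ : ℝ)⁻¹) : ℝ) : ℂ) * z.2)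

/-- `(m₁,m₂)`-homogeneity with weight `r`. -/
def WHomog (m₁ m₂ : ℕ) (P : ℂ × ℂ → ℝ) (r : ℝ) : Prop :=
  ∀ t : ℝ, 0 < t → ∀ z : ℂ × ℂ, P (wdil m₁ m₂ t z) = t ^ r * P z

/-- The weighted curve `{z₁^a = ζ z₂^b}`. -/
def wCurve (a b : ℕ) (ζ : ℂ) : Set (ℂ × ℂ) := {z | z.1 ^ a = ζ * z.2 ^ b}

/-- The parameters `ζ ∈ ℂ` of weighted curves along which `P` is harmonic. -/
def wHarmDirs (P : ℂ × ℂ → ℝ) (a b : ℕ) : Set ℂ :=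
  {ζ | HarmonicAlong P (wCurve a b ζ)}

/-- The union of all curves in `E(P)` (including the one for `ζ = ∞`). -/
def wEUnion (P : ℂ × ℂ → ℝ) (a b : ℕ) : Set (ℂ × ℂ) :=
  {z | (∃ ζ ∈ wHarmDirs P a b, z.1 ^ a = ζ * z.2 ^ b) ∨
       (HarmonicAlong P {w : ℂ × ℂ | w.2 = 0} ∧ z.2 = 0)}

/-- Property (A) in the `(m₁,m₂)`-homogeneous setting (with wedges). -/
def PropertyAW (m₁ m₂ : ℕ) (P : ℂ × ℂ → ℝ) : Prop :=
  NoPosDimVariety (leviDegen P \ wEUnion P (m₁ / Nat.gcd m₁ m₂) (m₂ / Nat.gcd m₁ m₂)) ∧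
  ∃ W : Set (ℂ × ℂ), IsClosed W ∧ (∀ z ∈ W, ∀ t : ℝ, 0 < t → wdil m₁ m₂ t z ∈ W) ∧
    leviDegen P \ wEUnion P (m₁ / Nat.gcd m₁ m₂) (m₂ / Nat.gcd m₁ m₂) ⊆ W ∧
    interior W ∩ wEUnion P (m₁ / Nat.gcd m₁ m₂) (m₂ / Nat.gcd m₁ m₂) = ∅

open Filter InnerProductSpace Laplacian Topology

section LineLaplacian

variable {E F G : Type*} [NormedAddCommGroup E] [NormedSpace ℂ E] [NormedAddCommGroup F]
  [NormedSpace ℝ F] [NormedAddCommGroup G] [NormedSpace ℝ G]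

lemma laplacian_eq_fderiv_fderiv (g : ℂ → F) (w : ℂ) :
    Δ g w = fderiv ℝ (fderiv ℝ g) w 1 1 + fderiv ℝ (fderiv ℝ g) w I I := by
  simp [laplacian_eq_iteratedFDeriv_complexPlane, iteratedFDeriv_two_apply]

/-- The Laplacian of `f` along the complex line through `z` with direction `v`, taken at `z`.
For real-valued `f` this is four times the Levi form. -/
def lineLaplacian (f : E → F) (z v : E) : F := Δ (fun w : ℂ => f (z + w • v)) 0

lemma laplacian_comp_line (f : E → F) (z v : E) (w : ℂ) :
    Δ (fun s : ℂ => f (z + s • v)) w = lineLaplacian f (z + w • v) v := by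
  have translate : (fun s : ℂ => f (z + w • v + s • v)) = fun s => f (z + (w + s) • v) := by
    simp only [add_smul, add_assoc]
  simp only [lineLaplacian, translate, laplacian_eq_iteratedFDeriv_complexPlane,
    iteratedFDeriv_comp_add_left 2 w (f := fun s : ℂ => f (z + s • v)), add_zero]

lemma lineLaplacian_comp_smul (f : E → F) (c : ℂ) (z v : E) :
    lineLaplacian (fun x => f (c • x)) z v = lineLaplacian f (c • z) (c • v) := by
  simp only [lineLaplacian, smul_add, smul_comm c]

lemma contDiff_comp_line {f : E → F} (hf : ContDiff ℝ 2 f) (z v : E) :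
    ContDiff ℝ 2 (fun w : ℂ => f (z + w • v)) := by
  fun_prop

lemma lineLaplacian_eq_fderiv_fderiv {f : E → F} (hf : ContDiff ℝ 2 f) (z v : E) :
    lineLaplacian f z v = fderiv ℝ (fderiv ℝ f) z v v
      + fderiv ℝ (fderiv ℝ f) z (I • v) (I • v) := by
  have hline : (fun w : ℂ => f (z + w • v)) =
      (fun x => f (z + x)) ∘ ((1 : ℂ →L[ℝ] ℂ).smulRight v) := by
    ext w; simp
  have htrans : ContDiff ℝ 2 (fun x => f (z + x)) := by fun_prop
  simp only [lineLaplacian, laplacian_eq_iteratedFDeriv_complexPlane, hline,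
    ContinuousLinearMap.iteratedFDeriv_comp_right _ htrans _ le_rfl,
    ContinuousMultilinearMap.compContinuousLinearMap_apply, iteratedFDeriv_comp_add_left,
    iteratedFDeriv_two_apply]
  simp

lemma lineLaplacian_smul_right {f : E → F} (hf : ContDiff ℝ 2 f) (z v : E) (c : ℂ) :
    lineLaplacian f z (c • v) = ‖c‖ ^ 2 • lineLaplacian f z v := by
  have hsymm : fderiv ℝ (fderiv ℝ f) z (I • v) v = fderiv ℝ (fderiv ℝ f) z v (I • v) :=
    hf.contDiffAt.isSymmSndFDerivAt (by simp) (I • v) v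
  have hc : c • v = c.re • v + c.im • (I • v) := by
    conv_lhs => rw [← re_add_im c]
    simp only [add_smul, mul_smul, coe_smul]
  have hIc : I • c • v = c.re • (I • v) - c.im • v := by
    rw [hc, smul_add, smul_comm I c.re, smul_comm I c.im, smul_smul I I, I_mul_I]
    simp [sub_eq_add_neg]
  rw [lineLaplacian_eq_fderiv_fderiv hf, lineLaplacian_eq_fderiv_fderiv hf, hIc, hc,
    Complex.sq_norm, normSq_apply]
  simp only [map_add, map_sub, map_smul, add_apply,
    sub_apply, smul_apply, hsymm]
  module

lemma lineLaplacian_clm_comp {f : E → F} (hf : ContDiff ℝ 2 f) (l : F →L[ℝ] G) (z v : E) :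
    lineLaplacian (fun x => l (f x)) z v = l (lineLaplacian f z v) :=
  (contDiff_comp_line hf z v).contDiffAt.laplacian_CLM_comp_left

lemma lineLaplacian_sum {ι : Type*} {s : Finset ι} {f : ι → E → F}
    (hf : ∀ i ∈ s, ContDiff ℝ 2 (f i)) (z v : E) :
    lineLaplacian (fun x => ∑ i ∈ s, f i x) z v = ∑ i ∈ s, lineLaplacian (f i) z v := by
  simp only [lineLaplacian, laplacian_eq_iteratedFDeriv_complexPlane]
  rw [iteratedFDeriv_fun_sum_apply
    fun i hi => (contDiff_comp_line (hf i hi) z v).contDiffAt]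
  simp [Finset.sum_add_distrib]

end LineLaplacian

section Wirtinger

lemma fderiv_wirtinger {E : Type*} [NormedAddCommGroup E] [NormedSpace ℝ E] {f : E → ℝ}
    (hf : ContDiff ℝ 2 f) (z a b d : E) :
    fderiv ℝ (fun y => (1 / 2 : ℂ) * (fderiv ℝ (fun w => (f w : ℂ)) y a
      + I * fderiv ℝ (fun w => (f w : ℂ)) y b)) z d
      = (1 / 2) * ((fderiv ℝ (fderiv ℝ f) z d a : ℂ) + I * (fderiv ℝ (fderiv ℝ f) z d b : ℂ)) := by
  have hf' : Differentiable ℝ (fderiv ℝ f) :=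
    (hf.fderiv_right (m := 1) (by norm_num)).differentiable (by norm_num)
  have first (y u : E) : fderiv ℝ (fun w => (f w : ℂ)) y u = (fderiv ℝ f y u : ℝ) := by
    have := ofRealCLM.hasFDerivAt.comp y (hf.differentiable (by norm_num) y).hasFDerivAt
    exact congrArg (· u) this.fderiv
  have second (u : E) : HasFDerivAt (fun y => ((fderiv ℝ f y u : ℝ) : ℂ))
      (ofRealCLM.comp ((fderiv ℝ (fderiv ℝ f) z).flip u)) z := by
    have := (hf' z).hasFDerivAt.clm_apply (hasFDerivAt_const u z)
    exact ofRealCLM.hasFDerivAt.comp z (by simpa using this)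
  simp_rw [first]
  have total : HasFDerivAt (fun y => (1 / 2 : ℂ) * (((fderiv ℝ f y a : ℝ) : ℂ)
      + I * ((fderiv ℝ f y b : ℝ) : ℂ))) _ z :=
    ((second a).add ((second b).const_mul I)).const_mul (1 / 2 : ℂ)
  rw [total.fderiv]
  simp [mul_add]

lemma lap_eq_laplacian {u : ℂ → ℝ} (hu : ContDiff ℝ 2 u) (w : ℂ) : lap u w = (Δ u w : ℂ) := by
  have hsymm : fderiv ℝ (fderiv ℝ u) w I 1 = fderiv ℝ (fderiv ℝ u) w 1 I :=
    hu.contDiffAt.isSymmSndFDerivAt (by simp) I 1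
  unfold lap wd1 wdbar1
  rw [fderiv_wirtinger hu, fderiv_wirtinger hu, laplacian_eq_fderiv_fderiv, hsymm, ofReal_add]
  linear_combination -(fderiv ℝ (fderiv ℝ u) w I I : ℂ) * I_sq

lemma mixedDeriv_eq_fderiv_fderiv {P : ℂ × ℂ → ℝ} (hP : ContDiff ℝ 2 P) (d e z : ℂ × ℂ) :
    mixedDeriv P d e z = (1 / 4) *
      ((fderiv ℝ (fderiv ℝ P) z d e : ℂ) + I * fderiv ℝ (fderiv ℝ P) z d (I • e)
        - I * (fderiv ℝ (fderiv ℝ P) z (I • d) e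
          + I * fderiv ℝ (fderiv ℝ P) z (I • d) (I • e))) := by
  unfold mixedDeriv wd wdbar
  rw [fderiv_wirtinger hP, fderiv_wirtinger hP]
  ring

lemma leviForm_eq_lineLaplacian {P : ℂ × ℂ → ℝ} (hP : ContDiff ℝ 2 P) (z v : ℂ × ℂ) :
    leviForm P z v = ((1 / 4 * lineLaplacian P z v : ℝ) : ℂ) := by
  have hsymm : ∀ a b, fderiv ℝ (fderiv ℝ P) z a b = fderiv ℝ (fderiv ℝ P) z b a :=
    hP.contDiffAt.isSymmSndFDerivAt (by simp)
  rw [lineLaplacian_eq_fderiv_fderiv hP]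
  unfold leviForm
  simp only [mixedDeriv_eq_fderiv_fderiv hP]
  generalize fderiv ℝ (fderiv ℝ P) z = B at hsymm
  obtain ⟨⟨a, b⟩, ⟨c, d⟩⟩ := v
  have hv : ((⟨a, b⟩, ⟨c, d⟩) : ℂ × ℂ) = a • (1, 0) + b • (I • (1, 0)) + c • (0, 1)
      + d • (I • (0, 1)) := by
    refine Prod.ext (Complex.ext ?_ ?_) (Complex.ext ?_ ?_) <;> simp
  have hIv : I • ((⟨a, b⟩, ⟨c, d⟩) : ℂ × ℂ) = (-b) • (1, 0) + a • (I • (1, 0))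
      + (-d) • (0, 1) + c • (I • (0, 1)) := by
    refine Prod.ext (Complex.ext ?_ ?_) (Complex.ext ?_ ?_) <;> simp
  rw [hIv, hv]
  simp only [map_add, map_smul, add_apply, smul_apply,
    smul_eq_mul]
  rw [hsymm (I • (1, 0)) (1, 0), hsymm (I • (0, 1)) (0, 1), hsymm (0, 1) (1, 0),
    hsymm (I • (0, 1)) (1, 0), hsymm (0, 1) (I • (1, 0)), hsymm (I • (0, 1)) (I • (1, 0))]
  apply Complex.ext <;> simp <;> ring

lemma IsPsh.lineLaplacian_nonneg {P : ℂ × ℂ → ℝ} (hpsh : IsPsh P) (hP : ContDiff ℝ 2 P)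
    (z v : ℂ × ℂ) : 0 ≤ lineLaplacian P z v := by
  have := hpsh z v
  rw [leviForm_eq_lineLaplacian hP, ofReal_re] at this
  linarith

lemma IsHarmonic.lineLaplacian_eq_zero {E : Type*} [NormedAddCommGroup E] [NormedSpace ℂ E]
    {P : E → ℝ} (hP : ContDiff ℝ 2 P) {z : E} (h : IsHarmonic fun w => P (w • z)) (w : ℂ) :
    lineLaplacian P (w • z) (w • z) = 0 := by
  have hline : ContDiff ℝ 2 fun w : ℂ => P (w • z) := by
    simpa using contDiff_comp_line hP 0 z
  have hzero : lineLaplacian P (w • z) z = 0 := by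
    have hΔ : Δ (fun w : ℂ => P (w • z)) w = 0 := by
      exact_mod_cast (lap_eq_laplacian hline w).symm.trans (h w)
    simpa [hΔ] using (laplacian_comp_line P 0 z w).symm
  rw [lineLaplacian_smul_right hP, hzero, smul_zero]

end Wirtinger

section Monomials

lemma hasFDerivAt_pow_mul_conj_pow (i j : ℕ) (z : ℂ) :
    HasFDerivAt (fun w : ℂ => w ^ i * conj w ^ j)
      ((i * (z ^ (i - 1) * conj z ^ j)) • (1 : ℂ →L[ℝ] ℂ)
        + (j * (z ^ i * conj z ^ (j - 1))) • (conjCLE : ℂ →L[ℝ] ℂ)) z := by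
  have hpow := (hasDerivAt_pow i z).hasFDerivAt.restrictScalars ℝ
  have hconj : HasFDerivAt (fun w : ℂ => conj w ^ j) _ z :=
    ((hasDerivAt_pow j (conj z)).hasFDerivAt.restrictScalars ℝ).comp z conjCLE.hasFDerivAt
  refine (hpow.mul hconj).congr_fderiv ?_
  ext
  simp only [add_apply, smul_apply, ContinuousLinearMap.comp_apply, ContinuousLinearEquiv.coe_coe,
    ContinuousAlgEquiv.coeCLE_apply, conjCAE_apply, ContinuousLinearMap.coe_restrictScalars',
    ContinuousLinearMap.toSpanSingleton_apply, smul_eq_mul, one_apply_eq_self]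
  ring

lemma laplacian_pow_mul_conj_pow (i j : ℕ) (z : ℂ) :
    Δ (fun w : ℂ => w ^ i * conj w ^ j) z
      = 4 * i * j * (z ^ (i - 1) * conj z ^ (j - 1)) := by
  have first := funext fun w => (hasFDerivAt_pow_mul_conj_pow i j w).fderiv
  have second : HasFDerivAt (fun w : ℂ =>
      (i * (w ^ (i - 1) * conj w ^ j)) • (1 : ℂ →L[ℝ] ℂ)
        + (j * (w ^ i * conj w ^ (j - 1))) • (conjCLE : ℂ →L[ℝ] ℂ)) _ z :=
    (((hasFDerivAt_pow_mul_conj_pow (i - 1) j z).const_mul (i : ℂ)).smul_const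
        (1 : ℂ →L[ℝ] ℂ)).add
      (((hasFDerivAt_pow_mul_conj_pow i (j - 1) z).const_mul (j : ℂ)).smul_const
        (conjCLE : ℂ →L[ℝ] ℂ))
  rw [laplacian_eq_fderiv_fderiv, first, second.fderiv]
  simp only [smul_add, add_apply, ContinuousLinearMap.smulRight_apply, smul_apply,
    one_apply_eq_self, smul_eq_mul, mul_one, ContinuousLinearEquiv.coe_coe,
    ContinuousAlgEquiv.coeCLE_apply, conjCAE_apply, map_one, conj_I, mul_neg]
  linear_combination (i * (i - 1 : ℕ) * z ^ (i - 1 - 1) * conj z ^ j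
    - 2 * i * j * (z ^ (i - 1) * conj z ^ (j - 1))
    + j * (j - 1 : ℕ) * z ^ i * conj z ^ (j - 1 - 1)) * I_sq

lemma lineLaplacian_self_of_bihomogeneous {E : Type*} [NormedAddCommGroup E] [NormedSpace ℂ E]
    {f : E → ℂ} {i j : ℕ} {z : E} (hf : ∀ w : ℂ, f (w • z) = w ^ i * conj w ^ j * f z) :
    lineLaplacian f z z = 4 * i * j * f z := by
  have hsmooth : ContDiff ℝ 2 fun w : ℂ => w ^ i * conj w ^ j :=
    (contDiff_id.pow i).mul (conjCLE.contDiff.pow j)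
  have hline : (fun w : ℂ => f (0 + w • z)) = f z • fun w => w ^ i * conj w ^ j := by
    funext w
    simp [hf, mul_comm (f z)]
  have hΔ := laplacian_comp_line f 0 z 1
  rw [hline, laplacian_smul _ hsmooth.contDiffAt, laplacian_pow_mul_conj_pow] at hΔ
  simpa [mul_comm (f z)] using hΔ.symm

/-- The monomial `z₁ ^ m₀ z̄₁ ^ m₁ z₂ ^ m₂ z̄₂ ^ m₃`; the exponents are indexed as in
`IsRealPoly2`. -/
def bimonomial (m : Fin 4 →₀ ℕ) (z : ℂ × ℂ) : ℂ :=
  z.1 ^ m 0 * conj z.1 ^ m 1 * z.2 ^ m 2 * conj z.2 ^ m 3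

/-- The degree of `bimonomial m` in the holomorphic coordinates `z₁, z₂`. -/
def holDegree (m : Fin 4 →₀ ℕ) : ℕ := m 0 + m 2

/-- The degree of `bimonomial m` in the antiholomorphic coordinates `z̄₁, z̄₂`. -/
def antiholDegree (m : Fin 4 →₀ ℕ) : ℕ := m 1 + m 3

lemma bimonomial_smul (m : Fin 4 →₀ ℕ) (w : ℂ) (z : ℂ × ℂ) :
    bimonomial m (w • z) = w ^ holDegree m * conj w ^ antiholDegree m * bimonomial m z := by
  simp only [bimonomial, holDegree, antiholDegree, Prod.smul_fst, Prod.smul_snd, smul_eq_mul,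
    map_mul, mul_pow, pow_add]
  ring

lemma contDiff_bimonomial (m : Fin 4 →₀ ℕ) : ContDiff ℝ 2 (bimonomial m) := by
  have hfst : ContDiff ℝ 2 fun z : ℂ × ℂ => conj z.1 := conjCLE.contDiff.comp contDiff_fst
  have hsnd : ContDiff ℝ 2 fun z : ℂ × ℂ => conj z.2 := conjCLE.contDiff.comp contDiff_snd
  exact (((contDiff_fst.pow _).mul (hfst.pow _)).mul (contDiff_snd.pow _)).mul (hsnd.pow _)

lemma differentiable_bimonomial {m : Fin 4 →₀ ℕ} (hm : antiholDegree m = 0) :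
    Differentiable ℂ (bimonomial m) := by
  obtain ⟨h1, h3⟩ := Nat.add_eq_zero_iff.1 hm
  unfold bimonomial
  simp only [h1, h3, pow_zero, mul_one]
  fun_prop

lemma differentiable_conj_bimonomial {m : Fin 4 →₀ ℕ} (hm : holDegree m = 0) :
    Differentiable ℂ fun z => conj (bimonomial m z) := by
  obtain ⟨h0, h2⟩ := Nat.add_eq_zero_iff.1 hm
  simp only [bimonomial, h0, h2, pow_zero, one_mul, mul_one, map_mul, map_pow, conj_conj]
  fun_prop

lemma eval_eq_sum_bimonomial (Q : MvPolynomial (Fin 4) ℂ) (z : ℂ × ℂ) :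
    MvPolynomial.eval ![z.1, conj z.1, z.2, conj z.2] Q
      = ∑ m ∈ Q.support, Q.coeff m * bimonomial m z := by
  simp [MvPolynomial.eval_eq', Fin.prod_univ_four, bimonomial]

lemma IsRealPoly2.contDiff {P : ℂ × ℂ → ℝ} (hpoly : IsRealPoly2 P) : ContDiff ℝ 2 P := by
  obtain ⟨Q, hQ⟩ := hpoly
  have hre : P = fun z => reCLM (∑ m ∈ Q.support, Q.coeff m * bimonomial m z) := by
    funext z
    rw [← eval_eq_sum_bimonomial, ← hQ, reCLM_apply, ofReal_re]
  rw [hre]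
  exact reCLM.contDiff.comp
    (ContDiff.sum fun m _ => contDiff_const.mul (contDiff_bimonomial m))

open MvPolynomial in
/-- The points `(z₁, z̄₁, z₂, z̄₂)` form a totally real subspace of maximal dimension: the
substitution `z = x + iy` turns them into `ℝ⁴`. -/
lemma eq_zero_of_eval_conj_eq_zero {Q : MvPolynomial (Fin 4) ℂ}
    (hQ : ∀ z : ℂ × ℂ, eval ![z.1, conj z.1, z.2, conj z.2] Q = 0) : Q = 0 := by
  let φ : (Fin 4 → ℂ) → Fin 4 → ℂ := fun x =>
    ![x 0 + I * x 1, x 0 - I * x 1, x 2 + I * x 3, x 2 - I * x 3]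
  have hφ : Function.Surjective φ := fun y =>
    ⟨![(y 0 + y 1) / 2, (y 0 - y 1) / (2 * I), (y 2 + y 3) / 2, (y 2 - y 3) / (2 * I)], by
      ext i
      fin_cases i <;> simp [φ] <;> field_simp <;> ring⟩
  let Qφ : MvPolynomial (Fin 4) ℂ :=
    bind₁ ![X 0 + C I * X 1, X 0 - C I * X 1, X 2 + C I * X 3, X 2 - C I * X 3] Q
  have heval (x : Fin 4 → ℂ) : eval x Qφ = eval (φ x) Q := by
    rw [← coe_aeval_eq_eval, ← coe_aeval_eq_eval, RingHom.coe_coe, RingHom.coe_coe, aeval_bind₁]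
    congr 2
    ext i
    fin_cases i <;> simp [φ]
  have hQφ : Qφ = 0 := by
    refine funext_set (fun _ => range ofReal)
      (fun _ => infinite_range_of_injective ofReal_injective) fun x hx => ?_
    choose r hr using fun i => hx i (mem_univ i)
    rw [heval, map_zero, ← hQ (r 0 + I * r 1, r 2 + I * r 3)]
    congr 2
    simp [φ, ← hr, sub_eq_add_neg]
  refine MvPolynomial.funext fun y => ?_
  obtain ⟨x, rfl⟩ := hφ y
  rw [← heval, hQφ, map_zero, map_zero]

lemma isPluriharmonic_of_lineLaplacian_self_eq_zero {P : ℂ × ℂ → ℝ} (hpoly : IsRealPoly2 P)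
    (hΔ : ∀ z, lineLaplacian P z z = 0) : IsPluriharmonic P := by
  have hP := hpoly.contDiff
  obtain ⟨Q, hQ⟩ := hpoly
  have hsum (z : ℂ × ℂ) : (P z : ℂ) = ∑ m ∈ Q.support, Q.coeff m * bimonomial m z :=
    (hQ z).trans (eval_eq_sum_bimonomial Q z)
  have hmixed : ∑ m ∈ Q.support, MvPolynomial.monomial m
      (4 * holDegree m * antiholDegree m * Q.coeff m) = 0 := by
    refine eq_zero_of_eval_conj_eq_zero fun z => ?_
    have hm (m : Fin 4 →₀ ℕ) : lineLaplacian (fun z => Q.coeff m * bimonomial m z) z z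
        = 4 * holDegree m * antiholDegree m * (Q.coeff m * bimonomial m z) :=
      lineLaplacian_self_of_bihomogeneous fun w => by rw [bimonomial_smul]; ring
    have hPΔ := lineLaplacian_clm_comp hP ofRealCLM z z
    simp only [ofRealCLM_apply, hΔ, ofReal_zero, hsum] at hPΔ
    rw [lineLaplacian_sum fun m _ => contDiff_const.mul (contDiff_bimonomial m)] at hPΔ
    rw [map_sum, ← hPΔ]
    refine Finset.sum_congr rfl fun m _ => ?_
    rw [hm, MvPolynomial.eval_monomial, Finsupp.prod_fintype _ _ fun _ => pow_zero _]
    simp [Fin.prod_univ_four, bimonomial, mul_assoc]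
  have hdegree (m) (hm : m ∈ Q.support) : antiholDegree m = 0 ∨ holDegree m = 0 := by
    have := congrArg (MvPolynomial.coeff m) hmixed
    simp only [MvPolynomial.coeff_sum, MvPolynomial.coeff_monomial, Finset.sum_ite_eq', if_pos hm,
      MvPolynomial.coeff_zero] at this
    simpa [MvPolynomial.mem_support_iff.1 hm, or_comm] using this
  refine ⟨fun z => ∑ m ∈ Q.support, if antiholDegree m = 0 then Q.coeff m * bimonomial m z
    else conj (Q.coeff m) * conj (bimonomial m z), ?_, fun z => ?_⟩
  · refine Differentiable.fun_sum fun m hm => ?_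
    split_ifs with h
    · exact (differentiable_bimonomial h).const_mul _
    · exact (differentiable_conj_bimonomial ((hdegree m hm).resolve_left h)).const_mul _
  · rw [← ofReal_re (P z), hsum, re_sum, re_sum]
    refine Finset.sum_congr rfl fun m _ => ?_
    split_ifs <;> simp

end Monomials

section Rotations

lemma sum_pow_mul_conj_pow_of_isPrimitiveRoot {ω : ℂ} {n i j : ℕ} (hω : IsPrimitiveRoot ω n)
    (hi : i < n) (hj : j < n) :
    ∑ l ∈ Finset.range n, (ω ^ l) ^ i * conj (ω ^ l) ^ j = if i = j then (n : ℂ) else 0 := by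
  have hω0 : ω ≠ 0 := hω.ne_zero (by omega)
  have hconj : conj ω = ω⁻¹ := by
    rw [inv_def, normSq_eq_norm_sq, hω.norm'_eq_one (by omega)]
    simp
  have hterm (l : ℕ) : (ω ^ l) ^ i * conj (ω ^ l) ^ j = (ω ^ i * (ω ^ j)⁻¹) ^ l := by
    rw [map_pow, hconj, mul_pow, inv_pow, inv_pow, inv_pow, ← pow_mul, ← pow_mul, ← pow_mul,
      ← pow_mul, mul_comm l, mul_comm l]
  simp_rw [hterm]
  split_ifs with hij
  · simp [hij, hω0]
  · have hne : ω ^ i * (ω ^ j)⁻¹ ≠ 1 := fun h =>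
      hij (hω.pow_inj hi hj ((mul_inv_eq_one₀ (pow_ne_zero _ hω0)).1 h))
    rw [geom_sum_eq hne, mul_pow, inv_pow, ← pow_mul, ← pow_mul, mul_comm i, mul_comm j,
      pow_mul, pow_mul, hω.pow_eq_one]
    simp

variable {E : Type*} [NormedAddCommGroup E] [NormedSpace ℂ E]

/-- The sum of the rotations of `P` by the first `n` powers of `ω` splits into parts `S j`,
`j < n`, which are homogeneous of degree `2 * j` and invariant under rotations. -/
structure IsRotationDecomposition (P : E → ℝ) (n : ℕ) (ω : ℂ) (S : ℕ → E → ℝ) : Prop where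
  pos : 0 < n
  contDiff : ∀ j, ContDiff ℝ 2 (S j)
  map_smul : ∀ j (w : ℂ) (z : E), S j (w • z) = (‖w‖ ^ 2) ^ j * S j z
  sum_eq : ∀ z, ∑ l ∈ Finset.range n, P (ω ^ l • z) = ∑ j ∈ Finset.range n, S j z

lemma sum_rotations_bimonomial {ω : ℂ} {n : ℕ} (hω : IsPrimitiveRoot ω n) {m : Fin 4 →₀ ℕ}
    (hhol : holDegree m < n) (hanti : antiholDegree m < n) (z : ℂ × ℂ) :
    ∑ l ∈ Finset.range n, bimonomial m (ω ^ l • z)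
      = if holDegree m = antiholDegree m then n * bimonomial m z else 0 := by
  simp_rw [bimonomial_smul]
  rw [← Finset.sum_mul, sum_pow_mul_conj_pow_of_isPrimitiveRoot hω hhol hanti, ite_mul, zero_mul]

/-- The part of bidegree `(j, j)` in `(z, z̄)` of the polynomial `Q`, as a function of `z`. -/
def bidegreePart (Q : MvPolynomial (Fin 4) ℂ) (j : ℕ) (z : ℂ × ℂ) : ℂ :=
  ∑ m ∈ Q.support with holDegree m = j ∧ antiholDegree m = j, Q.coeff m * bimonomial m z

lemma contDiff_bidegreePart (Q : MvPolynomial (Fin 4) ℂ) (j : ℕ) :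
    ContDiff ℝ 2 (bidegreePart Q j) :=
  ContDiff.sum fun m _ => contDiff_const.mul (contDiff_bimonomial m)

lemma bidegreePart_smul (Q : MvPolynomial (Fin 4) ℂ) (j : ℕ) (w : ℂ) (z : ℂ × ℂ) :
    bidegreePart Q j (w • z) = (((‖w‖ ^ 2) ^ j : ℝ) : ℂ) * bidegreePart Q j z := by
  rw [bidegreePart, bidegreePart, Finset.mul_sum]
  refine Finset.sum_congr rfl fun m hm => ?_
  obtain ⟨-, hhol, hanti⟩ := Finset.mem_filter.1 hm
  rw [bimonomial_smul, hhol, hanti, ← mul_pow, mul_conj, normSq_eq_norm_sq]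
  push_cast
  ring

lemma sum_rotations_eval {Q : MvPolynomial (Fin 4) ℂ} {ω : ℂ} {n : ℕ} (hω : IsPrimitiveRoot ω n)
    (hn : ∀ m ∈ Q.support, holDegree m < n ∧ antiholDegree m < n) (z : ℂ × ℂ) :
    ∑ l ∈ Finset.range n, ∑ m ∈ Q.support, Q.coeff m * bimonomial m (ω ^ l • z)
      = ∑ j ∈ Finset.range n, n * bidegreePart Q j z := by
  simp_rw [bidegreePart, Finset.mul_sum, Finset.sum_filter]
  rw [Finset.sum_comm, Finset.sum_comm (s := Finset.range n)]
  refine Finset.sum_congr rfl fun m hm => ?_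
  obtain ⟨hhol, hanti⟩ := hn m hm
  rw [← Finset.mul_sum, sum_rotations_bimonomial hω hhol hanti]
  simp only [ite_and, Finset.sum_ite_eq, Finset.mem_range, if_pos hhol, mul_ite, mul_zero,
    mul_left_comm, eq_comm (a := antiholDegree m)]

/-- The parts of bidegree `(j, j)` are the ones that survive the summation over rotations. -/
lemma IsRealPoly2.exists_isRotationDecomposition {P : ℂ × ℂ → ℝ} (hpoly : IsRealPoly2 P) :
    ∃ n ω S, IsRotationDecomposition P n ω S := by
  obtain ⟨Q, hQ⟩ := hpoly
  obtain ⟨n, hn0, hn⟩ : ∃ n ≠ 0, ∀ m ∈ Q.support, holDegree m < n ∧ antiholDegree m < n := by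
    refine ⟨Q.support.sup (fun m => holDegree m + antiholDegree m) + 1, Nat.succ_ne_zero _,
      fun m hm => ?_⟩
    have := Finset.le_sup (f := fun m => holDegree m + antiholDegree m) hm
    omega
  obtain ⟨ω, hω⟩ : ∃ ω : ℂ, IsPrimitiveRoot ω n := ⟨_, isPrimitiveRoot_exp n hn0⟩
  refine ⟨n, ω, fun j z => reCLM (n * bidegreePart Q j z), Nat.pos_of_ne_zero hn0,
    fun j => reCLM.contDiff.comp (contDiff_const.mul (contDiff_bidegreePart Q j)),
    fun j w z => ?_, fun z => ?_⟩
  · rw [bidegreePart_smul, mul_left_comm, reCLM_apply, re_ofReal_mul, reCLM_apply]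
  · have hsum := sum_rotations_eval hω hn z
    simp_rw [← eval_eq_sum_bimonomial, ← hQ, ← ofReal_sum] at hsum
    rw [← map_sum, ← hsum, reCLM_apply, ofReal_re]

/-- `leviPolynomial S n z v` gives, at `‖c‖ ^ 2`, the Laplacian of `∑ j < n, S j` along the line
through `c • z` with direction `c • v`. -/
def leviPolynomial (S : ℕ → E → ℝ) (n : ℕ) (z v : E) : Polynomial ℝ :=
  ∑ j ∈ Finset.range n, Polynomial.monomial j (lineLaplacian (S j) z v)

lemma coeff_leviPolynomial (S : ℕ → E → ℝ) {n j : ℕ} (hj : j < n) (z v : E) :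
    (leviPolynomial S n z v).coeff j = lineLaplacian (S j) z v := by
  simp [leviPolynomial, Polynomial.coeff_monomial, hj]

lemma coeff_nonneg_of_eval_nonneg {p : Polynomial ℝ} (hp : ∀ t > 0, 0 ≤ p.eval t) {m : ℕ}
    (hlow : ∀ j < m, p.coeff j = 0) : 0 ≤ p.coeff m := by
  obtain ⟨q, rfl⟩ := Polynomial.X_pow_dvd_iff.2 hlow
  have hq : ∀ t ∈ Ioi (0 : ℝ), 0 ≤ q.eval t := fun t ht =>
    nonneg_of_mul_nonneg_right (by simpa using hp t ht) (pow_pos ht m)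
  have hlim : Tendsto (fun t => q.eval t) (𝓝[>] 0) (𝓝 (q.eval 0)) :=
    (q.continuous.tendsto 0).mono_left nhdsWithin_le_nhds
  have := ge_of_tendsto hlim (eventually_mem_nhdsWithin.mono hq)
  simpa [Polynomial.coeff_X_pow_mul', Polynomial.coeff_zero_eq_eval_zero] using this

namespace IsRotationDecomposition

variable {P : E → ℝ} {n : ℕ} {ω : ℂ} {S : ℕ → E → ℝ}

lemma sum_lineLaplacian (h : IsRotationDecomposition P n ω S) (hP : ContDiff ℝ 2 P)
    (z v : E) (c : ℂ) :
    ∑ l ∈ Finset.range n, lineLaplacian P ((ω ^ l * c) • z) ((ω ^ l * c) • v)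
      = ∑ j ∈ Finset.range n, (‖c‖ ^ 2) ^ j * lineLaplacian (S j) z v := by
  have hrot (a : ℂ) : ContDiff ℝ 2 fun x => P (a • x) := by fun_prop
  have hscaled (j : ℕ) : lineLaplacian (fun x => (‖c‖ ^ 2) ^ j * S j x) z v
      = (‖c‖ ^ 2) ^ j * lineLaplacian (S j) z v :=
    lineLaplacian_clm_comp (h.contDiff j) (((‖c‖ ^ 2) ^ j) • ContinuousLinearMap.id ℝ ℝ) z v
  have hfun : (fun x => ∑ l ∈ Finset.range n, P ((ω ^ l * c) • x))
      = fun x => ∑ j ∈ Finset.range n, (‖c‖ ^ 2) ^ j * S j x := by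
    funext x
    simp only [mul_smul, h.sum_eq, h.map_smul]
  have := congrArg (lineLaplacian · z v) hfun
  rw [lineLaplacian_sum fun l _ => hrot _,
    lineLaplacian_sum fun j _ => contDiff_const.mul (h.contDiff j)] at this
  simpa only [lineLaplacian_comp_smul, hscaled] using this

lemma lineLaplacian_self (h : IsRotationDecomposition P n ω S) (j : ℕ) (z : E) :
    lineLaplacian (S j) z z = 4 * j ^ 2 * S j z := by
  have hbihom (w : ℂ) : (S j (w • z) : ℂ) = w ^ j * conj w ^ j * S j z := by
    rw [h.map_smul, ← mul_pow, mul_conj, normSq_eq_norm_sq]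
    push_cast
    rfl
  have : ((lineLaplacian (S j) z z : ℝ) : ℂ) = 4 * j * j * S j z :=
    (lineLaplacian_clm_comp (h.contDiff j) ofRealCLM z z).symm.trans
    (lineLaplacian_self_of_bihomogeneous (f := fun z => (S j z : ℂ)) hbihom)
  rw [sq, ← mul_assoc]
  exact_mod_cast this

lemma lineLaplacian_zero (h : IsRotationDecomposition P n ω S) (z v : E) :
    lineLaplacian (S 0) z v = 0 := by
  have hconst : S 0 = Function.const E (S 0 0) :=
    funext fun x => by simpa using (h.map_smul 0 0 x).symm
  rw [hconst]
  simp [lineLaplacian]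

lemma eval_leviPolynomial (h : IsRotationDecomposition P n ω S) (hP : ContDiff ℝ 2 P)
    (z v : E) {t : ℝ} (ht : 0 < t) : (leviPolynomial S n z v).eval t
      = ∑ l ∈ Finset.range n, lineLaplacian P ((ω ^ l * √t) • z) ((ω ^ l * √t) • v) := by
  rw [h.sum_lineLaplacian hP, norm_real, Real.norm_of_nonneg (Real.sqrt_nonneg t),
    Real.sq_sqrt ht.le, leviPolynomial, Polynomial.eval_finsetSum]
  simp only [Polynomial.eval_monomial, mul_comm]

lemma lineLaplacian_nonneg (h : IsRotationDecomposition P n ω S) (hP : ContDiff ℝ 2 P)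
    (hpsh : ∀ z v, 0 ≤ lineLaplacian P z v) {m : ℕ} (hm : m < n) (z v : E)
    (hlow : ∀ j < m, lineLaplacian (S j) z v = 0) : 0 ≤ lineLaplacian (S m) z v := by
  rw [← coeff_leviPolynomial S hm]
  refine coeff_nonneg_of_eval_nonneg (fun t ht => ?_) fun j hj => ?_
  · rw [h.eval_leviPolynomial hP z v ht]
    exact Finset.sum_nonneg fun l _ => hpsh _ _
  · rw [coeff_leviPolynomial S (hj.trans hm), hlow j hj]

lemma eq_zero_of_isHarmonic (h : IsRotationDecomposition P n ω S) (hP : ContDiff ℝ 2 P)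
    {z : E} (hz : IsHarmonic fun w => P (w • z)) {m : ℕ} (hm : m < n) (hm0 : m ≠ 0) :
    S m z = 0 := by
  have hpoly : leviPolynomial S n z z = 0 := by
    refine Polynomial.eq_zero_of_infinite_isRoot _ ((Ioi_infinite (0 : ℝ)).mono fun t ht => ?_)
    rw [mem_ofPred_eq, Polynomial.IsRoot.def, h.eval_leviPolynomial hP z z ht]
    exact Finset.sum_eq_zero fun l _ => hz.lineLaplacian_eq_zero hP _
  have := coeff_leviPolynomial S hm z z
  rw [hpoly, h.lineLaplacian_self, Polynomial.coeff_zero] at this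
  simpa [hm0] using this.symm

lemma lineLaplacian_eq_zero (h : IsRotationDecomposition P n ω S) (hP : ContDiff ℝ 2 P)
    (hpsh : ∀ z v, 0 ≤ lineLaplacian P z v) (hS : ∀ j < n, j ≠ 0 → S j = 0) (z v : E) :
    lineLaplacian P z v = 0 := by
  have hsum : ∑ l ∈ Finset.range n, lineLaplacian P ((ω ^ l * 1) • z) ((ω ^ l * 1) • v) = 0 := by
    rw [h.sum_lineLaplacian hP z v 1]
    refine Finset.sum_eq_zero fun j hj => ?_
    rcases eq_or_ne j 0 with rfl | hj0
    · simp [h.lineLaplacian_zero]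
    · simp [hS j (Finset.mem_range.1 hj) hj0, lineLaplacian]
  simpa using (Finset.sum_eq_zero_iff_of_nonneg fun l _ => hpsh _ _).1 hsum 0
    (Finset.mem_range.2 h.pos)

end IsRotationDecomposition

end Rotations

section SecondDerivativeTest

lemma deriv_deriv_nonpos_of_isLocalMax {f : ℝ → ℝ} {a : ℝ} (hmax : IsLocalMax f a)
    (hf : ContinuousAt f a) : deriv (deriv f) a ≤ 0 := by
  by_contra! hpos
  have hmin : IsLocalMin f a := isLocalMin_of_deriv_deriv_pos hpos hmax.deriv_eq_zero hf
  have hconst : f =ᶠ[𝓝 a] fun _ => f a := by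
    filter_upwards [hmax, hmin] with x h₁ h₂ using le_antisymm h₁ h₂
  rw [hconst.deriv.deriv_eq] at hpos
  simp at hpos

lemma fderiv_fderiv_nonpos_of_isLocalMax {E : Type*} [NormedAddCommGroup E] [NormedSpace ℝ E]
    {f : E → ℝ} {a : E} (hmax : IsLocalMax f a) (hf : ContDiffAt ℝ 2 f a) (v : E) :
    fderiv ℝ (fderiv ℝ f) a v v ≤ 0 := by
  let line : ℝ → E := fun t => a + t • v
  have hline (t : ℝ) : HasDerivAt line v t := by
    simpa [line] using ((hasDerivAt_id t).smul_const v).const_add a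
  have hline0 : line 0 = a := by simp [line]
  have htends : Tendsto line (𝓝 0) (𝓝 a) := hline0 ▸ (hline 0).continuousAt
  have hfirst : deriv (f ∘ line) =ᶠ[𝓝 0] fun t => fderiv ℝ f (line t) v := by
    filter_upwards [htends.eventually (hf.eventually (by simp))] with t ht
    exact ((ht.differentiableAt (by simp)).hasFDerivAt.comp_hasDerivAt t (hline t)).deriv
  have hsecond : HasDerivAt (fun t => fderiv ℝ f (line t) v) (fderiv ℝ (fderiv ℝ f) a v v) 0 := by
    have hdiff : DifferentiableAt ℝ (fderiv ℝ f) (line 0) :=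
      hline0.symm ▸ (hf.fderiv_right (m := 1) (by norm_num)).differentiableAt (by simp)
    simpa [hline0] using
      (hdiff.hasFDerivAt.comp_hasDerivAt 0 (hline 0)).clm_apply (hasDerivAt_const 0 v)
  rw [← hsecond.deriv, ← hfirst.deriv_eq]
  refine deriv_deriv_nonpos_of_isLocalMax ?_ ?_
  · exact IsLocalMax.comp_continuous (f := f) (by rwa [hline0]) (hline 0).continuousAt
  · exact ContinuousAt.comp (by rw [hline0]; exact hf.continuousAt) (hline 0).continuousAt

lemma laplacian_nonpos_of_isLocalMax {g : ℂ → ℝ} {w : ℂ} (hmax : IsLocalMax g w)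
    (hg : ContDiffAt ℝ 2 g w) : Δ g w ≤ 0 := by
  rw [laplacian_eq_fderiv_fderiv]
  exact add_nonpos (fderiv_fderiv_nonpos_of_isLocalMax hmax hg 1)
    (fderiv_fderiv_nonpos_of_isLocalMax hmax hg I)

end SecondDerivativeTest

section Log

lemma laplacian_log {g : ℂ → ℝ} {w : ℂ} (hg : ContDiffAt ℝ 2 g w) (h0 : g w ≠ 0) :
    Δ (fun s => Real.log (g s)) w
      = Δ g w / g w - (fderiv ℝ g w 1 ^ 2 + fderiv ℝ g w I ^ 2) / g w ^ 2 := by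
  have hfirst : fderiv ℝ (fun s => Real.log (g s)) =ᶠ[𝓝 w] fun s => (g s)⁻¹ • fderiv ℝ g s := by
    filter_upwards [hg.eventually (by simp), hg.continuousAt.eventually_ne h0] with s hs hs0
    exact ((hs.differentiableAt (by simp)).hasFDerivAt.log hs0).fderiv
  have hdg : HasFDerivAt (fderiv ℝ g) (fderiv ℝ (fderiv ℝ g) w) w :=
    ((hg.fderiv_right (m := 1) (by norm_num)).differentiableAt (by simp)).hasFDerivAt
  have hginv := (hasDerivAt_inv h0).comp_hasFDerivAt w (hg.differentiableAt (by simp)).hasFDerivAt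
  have hsecond := (hginv.smul hdg).congr_of_eventuallyEq hfirst
  rw [laplacian_eq_fderiv_fderiv, laplacian_eq_fderiv_fderiv, hsecond.fderiv]
  simp only [Function.comp_apply, neg_smul, add_apply, smul_apply,
    ContinuousLinearMap.smulRight_apply, neg_apply, smul_eq_mul]
  field_simp
  ring

lemma laplacian_log_nonneg {g : ℂ → ℝ} {w : ℂ} (hg : ContDiffAt ℝ 2 g w) (hpos : 0 < g w)
    (hcrit : fderiv ℝ g w = 0) (hΔ : 0 ≤ Δ g w) : 0 ≤ Δ (fun s => Real.log (g s)) w := by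
  rw [laplacian_log hg hpos.ne', hcrit]
  simpa using div_nonneg hΔ hpos.le

/-- The square of the Euclidean norm of `ℂ²`, whereas the norm of `ℂ × ℂ` is the sup norm. -/
def sqNorm (z : ℂ × ℂ) : ℝ := normSq z.1 + normSq z.2

lemma sqNorm_pos {z : ℂ × ℂ} (hz : z ≠ 0) : 0 < sqNorm z := by
  obtain h | h : z.1 ≠ 0 ∨ z.2 ≠ 0 := by
    contrapose! hz
    exact Prod.ext hz.1 hz.2
  · exact add_pos_of_pos_of_nonneg (normSq_pos.2 h) (normSq_nonneg _)
  · exact add_pos_of_nonneg_of_pos (normSq_nonneg _) (normSq_pos.2 h)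

lemma sqNorm_smul (t : ℝ) (z : ℂ × ℂ) : sqNorm (t • z) = t ^ 2 * sqNorm z := by
  simp only [sqNorm, Prod.smul_fst, Prod.smul_snd, real_smul, map_mul, normSq_ofReal]
  ring

lemma contDiff_sqNorm : ContDiff ℝ 2 sqNorm := by
  unfold sqNorm
  simp only [normSq_eq_norm_sq]
  exact (contDiff_fst.norm_sq ℝ).add (contDiff_snd.norm_sq ℝ)

lemma sqNorm_add_smul (q v : ℂ × ℂ) (w : ℂ) : sqNorm (q + w • v)
    = sqNorm q + 2 * (w * (conj q.1 * v.1 + conj q.2 * v.2)).re + sqNorm v * ‖w‖ ^ 2 := by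
  simp only [sqNorm, ← normSq_eq_norm_sq, normSq_apply, Prod.fst_add, Prod.snd_add, Prod.smul_fst,
    Prod.smul_snd, smul_eq_mul, add_re, add_im, mul_re, mul_im, conj_re, conj_im]
  ring

lemma sqNorm_mul_sqNorm (q v : ℂ × ℂ) : sqNorm q * sqNorm v
    = normSq (conj q.1 * v.1 + conj q.2 * v.2) + normSq (q.1 * v.2 - q.2 * v.1) := by
  simp only [sqNorm, normSq_apply, add_re, add_im, sub_re, sub_im, mul_re, mul_im, conj_re, conj_im]
  ring

lemma laplacian_log_sqNorm {q : ℂ × ℂ} (hq : q ≠ 0) (v : ℂ × ℂ) :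
    Δ (fun w : ℂ => Real.log (sqNorm (q + w • v))) 0
      = 4 * normSq (q.1 * v.2 - q.2 * v.1) / sqNorm q ^ 2 := by
  set c := conj q.1 * v.1 + conj q.2 * v.2 with hc
  let g : ℂ → ℝ := fun w => sqNorm (q + w • v)
  have hg0 : g 0 = sqNorm q := by simp [g]
  have hfirst (w : ℂ) : HasFDerivAt g
      ((2 : ℝ) • reCLM.comp ((ContinuousLinearMap.mul ℝ ℂ).flip c)
        + sqNorm v • (2 • innerSL ℝ w)) w := by
    have hlin := (reCLM.comp ((ContinuousLinearMap.mul ℝ ℂ).flip c)).hasFDerivAt (x := w)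
    have := ((hlin.const_mul 2).const_add (sqNorm q)).add
      ((hasStrictFDerivAt_norm_sq w).hasFDerivAt.const_mul (sqNorm v))
    have hg : g = fun w => sqNorm q + 2 * (w * c).re + sqNorm v * ‖w‖ ^ 2 :=
      funext (sqNorm_add_smul q v)
    rw [hg]
    exact this
  have hsecond : HasFDerivAt (fderiv ℝ g) (sqNorm v • (2 • innerSL ℝ)) 0 := by
    rw [funext fun w => (hfirst w).fderiv]
    exact ((((innerSL ℝ).hasFDerivAt.const_smul 2).const_smul (sqNorm v)).const_add _)
  have hg : ContDiffAt ℝ 2 g 0 := (contDiff_comp_line contDiff_sqNorm q v).contDiffAt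
  have hpos := sqNorm_pos hq
  have hlagrange := sqNorm_mul_sqNorm q v
  rw [← hc, normSq_apply c] at hlagrange
  rw [laplacian_log hg (by rw [hg0]; exact hpos.ne'), laplacian_eq_fderiv_fderiv, hsecond.fderiv,
    (hfirst 0).fderiv, hg0]
  have hinner (x : ℂ) : innerSL ℝ x x = ‖x‖ ^ 2 := real_inner_self_eq_norm_sq x
  simp only [smul_apply, hinner, norm_one, one_pow, nsmul_eq_mul, Nat.cast_ofNat, mul_one,
    smul_eq_mul, norm_I, ContinuousLinearMap.flip_mul, map_zero, smul_zero, add_zero,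
    ContinuousLinearMap.comp_apply, ContinuousLinearMap.mul_apply', reCLM_apply, mul_re, I_re,
    mul_zero, I_im, zero_sub, mul_neg, even_two, Even.neg_pow]
  field_simp
  linear_combination 4 * hlagrange

end Log

section Homogeneous

variable {E : Type*} [NormedAddCommGroup E] [NormedSpace ℝ E] {f : E → ℝ}

lemma fderiv_self_of_homogeneous {z : E} (hf : DifferentiableAt ℝ f z) {d : ℕ}
    (hhom : ∀ t : ℝ, 0 < t → f (t • z) = t ^ d * f z) : fderiv ℝ f z z = d * f z := by
  have hray : HasDerivAt (fun t : ℝ => t • z) z 1 := by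
    simpa using (hasDerivAt_id (1 : ℝ)).smul_const z
  have hleft : HasDerivAt (fun t : ℝ => f (t • z)) (fderiv ℝ f z z) 1 :=
    HasFDerivAt.comp_hasDerivAt 1 (by simpa using hf.hasFDerivAt) hray
  have hright : HasDerivAt (fun t : ℝ => t ^ d * f z) (d * f z) 1 := by
    simpa using (hasDerivAt_pow d (1 : ℝ)).mul_const (f z)
  refine hleft.unique (hright.congr_of_eventuallyEq ?_)
  filter_upwards [lt_mem_nhds zero_lt_one] with t ht using hhom t ht

lemma exists_isMaxOn_of_scaleInvariant [ProperSpace E] [Nontrivial E]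
    (hf : ContinuousOn f {0}ᶜ) (hhom : ∀ t : ℝ, 0 < t → ∀ z, f (t • z) = f z) :
    ∃ q ≠ 0, IsMaxOn f {0}ᶜ q := by
  have hsphere : sphere (0 : E) 1 ⊆ {0}ᶜ := fun z hz => ne_zero_of_mem_unit_sphere ⟨z, hz⟩
  obtain ⟨q, hq, hmax⟩ := (isCompact_sphere (0 : E) 1).exists_isMaxOn
    (NormedSpace.sphere_nonempty.2 zero_le_one) (hf.mono hsphere)
  refine ⟨q, hsphere hq, fun z hz => ?_⟩
  have hz' : ‖z‖⁻¹ • z ∈ sphere (0 : E) 1 := by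
    rw [mem_sphere_zero_iff_norm, norm_smul, norm_inv, norm_norm,
      inv_mul_cancel₀ (norm_ne_zero_iff.2 hz)]
  rw [mem_ofPred_eq, ← hhom _ (inv_pos.2 (norm_pos_iff.2 hz))]
  exact hmax hz'

end Homogeneous

section CriticalDirection

lemma exists_transversal_complex_line_le_ker (l : ℂ × ℂ →L[ℝ] ℝ) {q : ℂ × ℂ} (hq : l q ≠ 0) :
    ∃ v : ℂ × ℂ, (∀ c : ℂ, l (c • v) = 0) ∧ q.1 * v.2 - q.2 * v.1 ≠ 0 := by
  let L : StrongDual ℂ (ℂ × ℂ) := StrongDual.extendRCLike l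
  have hre (x : ℂ × ℂ) : (L x).re = l x := StrongDual.re_extendRCLike_apply (𝕜 := ℂ) l x
  have hL (x : ℂ × ℂ) : L x = x.1 * L (1, 0) + x.2 * L (0, 1) := by
    have hx : x = x.1 • (1, 0) + x.2 • (0, 1) := by ext <;> simp
    conv_lhs => rw [hx, map_add, map_smul, map_smul, smul_eq_mul, smul_eq_mul]
  refine ⟨(L (0, 1), -L (1, 0)), fun c => ?_, fun h => hq ?_⟩
  · rw [← hre, map_smul, hL]
    simp [mul_comm (L (0, 1))]
  · rw [← hre, hL, ← zero_re]
    congr 1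
    linear_combination -h

lemma fderiv_comp_line_eq_zero {E : Type*} [NormedAddCommGroup E] [NormedSpace ℂ E] {f : E → ℝ}
    {q v : E} (hf : DifferentiableAt ℝ f q) (hv : ∀ c : ℂ, fderiv ℝ f q (c • v) = 0) :
    fderiv ℝ (fun w : ℂ => f (q + w • v)) 0 = 0 := by
  have hline : HasFDerivAt (fun w : ℂ => q + w • v) ((1 : ℂ →L[ℝ] ℂ).smulRight v) 0 :=
    ((1 : ℂ →L[ℝ] ℂ).smulRight v).hasFDerivAt.const_add q
  have hf' : HasFDerivAt f (fderiv ℝ f q) (q + (0 : ℂ) • v) := by simpa using hf.hasFDerivAt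
  refine (hf'.comp 0 hline).fderiv.trans ?_
  ext c
  simpa using hv c

end CriticalDirection

section LineProduct

/-- The product of the linear forms whose zero sets are the lines `{(a * w, w)}`, `a ∈ s`. -/
def lineProd (s : Finset ℂ) (z : ℂ × ℂ) : ℂ := ∏ a ∈ s, (z.1 - a * z.2)

lemma lineProd_smul (s : Finset ℂ) (t : ℝ) (z : ℂ × ℂ) :
    lineProd s (t • z) = t ^ s.card * lineProd s z := by
  simp [lineProd, ← Finset.prod_const, ← Finset.prod_mul_distrib, mul_sub, mul_left_comm]

lemma differentiable_lineProd (s : Finset ℂ) : Differentiable ℂ (lineProd s) := fun z => by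
  have hfactor (a : ℂ) : DifferentiableAt ℂ (fun z : ℂ × ℂ => z.1 - a * z.2) z := by fun_prop
  exact (HasFDerivAt.finsetProd fun a _ => (hfactor a).hasFDerivAt).differentiableAt

lemma lineProd_eq_zero_iff {s : Finset ℂ} {z : ℂ × ℂ} :
    lineProd s z = 0 ↔ ∃ a ∈ s, z = (a * z.2, z.2) := by
  simp [lineProd, Finset.prod_eq_zero_iff, sub_eq_zero, Prod.ext_iff]

/-- The quotient to which the maximum principle is applied; division by zero makes it `0` on the
lines. The exponents give `R ^ 3 * sqNorm` and `lineProd s ^ 2` the same degree `6 * m + 2` when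
`R` is homogeneous of degree `2 * m` and `s` has `3 * m + 1` elements. -/
def lineQuotient (R : ℂ × ℂ → ℝ) (s : Finset ℂ) (z : ℂ × ℂ) : ℝ :=
  R z ^ 3 * sqNorm z / ‖lineProd s z‖ ^ 2

variable {R : ℂ × ℂ → ℝ} {s : Finset ℂ}

lemma isBigO_lineProd {q : ℂ × ℂ} (hR : ContDiffAt ℝ 1 R q)
    (hvanish : ∀ a ∈ s, ∀ w, R (a * w, w) = 0) (hq : q ≠ 0) (hsq : lineProd s q = 0) :
    R =O[𝓝 q] lineProd s := by
  obtain ⟨a, ha, hqa⟩ := lineProd_eq_zero_iff.1 hsq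
  have hq2 : q.2 ≠ 0 := fun h => hq (by rw [hqa, h]; simp)
  have hsplit (z) : lineProd s z = (z.1 - a * z.2) * lineProd (s.erase a) z :=
    (Finset.mul_prod_erase s (fun a => z.1 - a * z.2) ha).symm
  have herase : lineProd (s.erase a) q ≠ 0 := fun h => by
    obtain ⟨b, hb, hqb⟩ := lineProd_eq_zero_iff.1 h
    exact Finset.ne_of_mem_erase hb
      (mul_right_cancel₀ hq2 ((Prod.ext_iff.1 hqb).1.symm.trans (Prod.ext_iff.1 hqa).1))
  have hform : R =O[𝓝 q] fun z => z.1 - a * z.2 := by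
    obtain ⟨K, U, hU, hK⟩ := hR.exists_lipschitzOnWith
    have hproj : Tendsto (fun z : ℂ × ℂ => (a * z.2, z.2)) (𝓝 q) (𝓝 q) := by
      nth_rw 2 [hqa]
      exact Continuous.tendsto (by fun_prop) q
    refine Asymptotics.IsBigO.of_bound K ?_
    filter_upwards [hU, hproj hU] with z hz hz'
    have hdist : dist z (a * z.2, z.2) = ‖z.1 - a * z.2‖ := by
      rw [Prod.dist_eq, dist_self, dist_eq_norm, max_eq_left (norm_nonneg _)]
    simpa [hvanish a ha, hdist] using hK.dist_le_mul z hz _ hz'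
  have hone : (fun _ => (1 : ℝ)) =O[𝓝 q] lineProd (s.erase a) :=
    (Asymptotics.isBigO_const_left_iff_pos_le_norm one_ne_zero).2
      ⟨‖lineProd (s.erase a) q‖ / 2, by positivity,
        ((differentiable_lineProd _).continuous.norm.tendsto q).eventually_const_le
          (half_lt_self (norm_pos_iff.2 herase))⟩
  refine Asymptotics.isBigO_norm_right.1 ?_
  simpa [hsplit] using hform.norm_right.mul hone.norm_right

lemma lineQuotient_pos_iff {z : ℂ × ℂ} :
    0 < lineQuotient R s z ↔ 0 < R z ∧ z ≠ 0 ∧ lineProd s z ≠ 0 := by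
  constructor
  · intro h
    have hz : z ≠ 0 := by rintro rfl; simp [lineQuotient, sqNorm] at h
    have hE : lineProd s z ≠ 0 := fun hE => by simp [lineQuotient, hE] at h
    rw [lineQuotient, div_pos_iff_of_pos_right (by positivity),
      mul_pos_iff_of_pos_right (sqNorm_pos hz), Odd.pow_pos_iff (by decide)] at h
    exact ⟨h, hz, hE⟩
  · rintro ⟨hRz, hz, hE⟩
    have := sqNorm_pos hz
    unfold lineQuotient
    positivity

lemma continuousAt_lineQuotient_of_lineProd_ne_zero {q : ℂ × ℂ} (hR : ContinuousAt R q)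
    (hsq : lineProd s q ≠ 0) : ContinuousAt (lineQuotient R s) q :=
  ((hR.pow 3).mul contDiff_sqNorm.continuous.continuousAt).div
    ((differentiable_lineProd s).continuous.norm.pow 2).continuousAt (by simpa using hsq)

lemma continuousAt_lineQuotient {q : ℂ × ℂ} (hR : ContDiffAt ℝ 1 R q)
    (hvanish : ∀ a ∈ s, ∀ w, R (a * w, w) = 0) (hq : q ≠ 0) :
    ContinuousAt (lineQuotient R s) q := by
  by_cases hsq : lineProd s q = 0
  · have hbdd : IsBoundedUnder (· ≤ ·) (𝓝 q) fun z => ‖R z ^ 2 / ‖lineProd s z‖ ^ 2‖ :=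
      Asymptotics.div_isBoundedUnder_of_isBigO
        ((isBigO_lineProd hR hvanish hq hsq).norm_right.pow 2)
    have hRq : R q = 0 := by
      obtain ⟨a, ha, hqa⟩ := lineProd_eq_zero_iff.1 hsq
      rw [hqa, hvanish a ha]
    have hnum : Tendsto (fun z => R z * sqNorm z) (𝓝 q) (𝓝 0) := by
      have := (hR.continuousAt.mul contDiff_sqNorm.continuous.continuousAt).tendsto
      rwa [Pi.mul_apply, hRq, zero_mul] at this
    rw [ContinuousAt, lineQuotient, hsq, norm_zero, zero_pow two_ne_zero, div_zero]
    refine (hnum.zero_mul_isBoundedUnder_le hbdd).congr fun z => ?_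
    rw [lineQuotient]
    ring
  · exact continuousAt_lineQuotient_of_lineProd_ne_zero hR.continuousAt hsq

lemma lineQuotient_smul {m : ℕ} (hhom : HomogeneousDeg R (2 * m)) (hs : s.card = 3 * m + 1) {t : ℝ}
    (ht : 0 < t) (z : ℂ × ℂ) : lineQuotient R s (t • z) = lineQuotient R s z := by
  have hnum : R (t • z) ^ 3 * sqNorm (t • z) = t ^ (6 * m + 2) * (R z ^ 3 * sqNorm z) := by
    rw [hhom t ht, sqNorm_smul]
    ring
  have hden : ‖lineProd s (t • z)‖ ^ 2 = t ^ (6 * m + 2) * ‖lineProd s z‖ ^ 2 := by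
    rw [lineProd_smul, hs, norm_mul, norm_pow, norm_real, Real.norm_of_nonneg ht.le]
    ring
  rw [lineQuotient, hnum, hden, mul_div_mul_left _ _ (pow_pos ht _).ne', lineQuotient]

lemma log_lineQuotient {z : ℂ × ℂ} (h : 0 < lineQuotient R s z) :
    Real.log (lineQuotient R s z)
      = 3 * Real.log (R z) + Real.log (sqNorm z) - 2 * Real.log ‖lineProd s z‖ := by
  obtain ⟨hRz, hz, hE⟩ := lineQuotient_pos_iff.1 h
  have hN := (sqNorm_pos hz).ne'
  rw [lineQuotient, Real.log_div (by positivity) (by positivity), Real.log_mul (by positivity) hN,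
    Real.log_pow, Real.log_pow]
  norm_cast

lemma eventually_lineQuotient_pos {q : ℂ × ℂ} (hR : ContinuousAt R q)
    (hpos : 0 < lineQuotient R s q) : ∀ᶠ z in 𝓝 q, 0 < lineQuotient R s z :=
  (continuousAt_lineQuotient_of_lineProd_ne_zero hR
    (lineQuotient_pos_iff.1 hpos).2.2).eventually_const_lt hpos

lemma harmonicAt_log_norm_lineProd_comp_line {q : ℂ × ℂ} (v : ℂ × ℂ) (hEq : lineProd s q ≠ 0) :
    HarmonicAt (fun w : ℂ => Real.log ‖lineProd s (q + w • v)‖) 0 := by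
  have hE : Differentiable ℂ fun w : ℂ => lineProd s (q + w • v) :=
    (differentiable_lineProd s).comp (by fun_prop)
  exact (hE.analyticAt 0).harmonicAt_log_norm (by simpa using hEq)

lemma log_lineQuotient_comp_line {q : ℂ × ℂ} (v : ℂ × ℂ) (hR : ContinuousAt R q)
    (hpos : 0 < lineQuotient R s q) :
    (fun w : ℂ => Real.log (lineQuotient R s (q + w • v))) =ᶠ[𝓝 0]
      (3 : ℝ) • (fun w : ℂ => Real.log (R (q + w • v)))
        + (fun w : ℂ => Real.log (sqNorm (q + w • v)))
        - (2 : ℝ) • fun w : ℂ => Real.log ‖lineProd s (q + w • v)‖ := by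
  have hline : Tendsto (fun w : ℂ => q + w • v) (𝓝 0) (𝓝 q) := by
    simpa using (by fun_prop : Continuous fun w : ℂ => q + w • v).tendsto 0
  filter_upwards [hline (eventually_lineQuotient_pos hR hpos)] with w hw
  exact log_lineQuotient hw

lemma contDiffAt_and_laplacian_pos_log_lineQuotient {q v : ℂ × ℂ} (hR : ContDiff ℝ 2 R)
    (hpos : 0 < lineQuotient R s q) (hv : ∀ c : ℂ, fderiv ℝ R q (c • v) = 0)
    (hqv : q.1 * v.2 - q.2 * v.1 ≠ 0) (hΔ : 0 ≤ lineLaplacian R q v) :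
    ContDiffAt ℝ 2 (fun w : ℂ => Real.log (lineQuotient R s (q + w • v))) 0
      ∧ 0 < Δ (fun w : ℂ => Real.log (lineQuotient R s (q + w • v))) 0 := by
  obtain ⟨hRq, hq, hE⟩ := lineQuotient_pos_iff.1 hpos
  have hlog := log_lineQuotient_comp_line v hR.continuous.continuousAt hpos
  have hRline : ContDiffAt ℝ 2 (fun w : ℂ => R (q + w • v)) 0 :=
    (contDiff_comp_line hR q v).contDiffAt
  have hlogR : ContDiffAt ℝ 2 (fun w : ℂ => Real.log (R (q + w • v))) 0 :=
    hRline.log (by simpa using hRq.ne')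
  have hlogN : ContDiffAt ℝ 2 (fun w : ℂ => Real.log (sqNorm (q + w • v))) 0 :=
    (contDiff_comp_line contDiff_sqNorm q v).contDiffAt.log (by simpa using (sqNorm_pos hq).ne')
  obtain ⟨hlogE, hΔE⟩ := harmonicAt_log_norm_lineProd_comp_line v hE
  have hΔR : 0 ≤ Δ (fun w : ℂ => Real.log (R (q + w • v))) 0 :=
    laplacian_log_nonneg hRline (by simpa using hRq)
      (fderiv_comp_line_eq_zero (hR.differentiable two_ne_zero q) hv) hΔ
  have hΔN : 0 < Δ (fun w : ℂ => Real.log (sqNorm (q + w • v))) 0 := by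
    rw [laplacian_log_sqNorm hq]
    have := normSq_pos.2 hqv
    have := sqNorm_pos hq
    positivity
  set logR := fun w : ℂ => Real.log (R (q + w • v))
  set logN := fun w : ℂ => Real.log (sqNorm (q + w • v))
  set logE := fun w : ℂ => Real.log ‖lineProd s (q + w • v)‖
  have hlogR3 : ContDiffAt ℝ 2 ((3 : ℝ) • logR) 0 := hlogR.const_smul (3 : ℝ)
  have hlogE2 : ContDiffAt ℝ 2 ((2 : ℝ) • logE) 0 := hlogE.const_smul (2 : ℝ)
  have hlogRN : ContDiffAt ℝ 2 ((3 : ℝ) • logR + logN) 0 := hlogR3.add hlogN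
  refine ⟨(hlogRN.sub hlogE2).congr_of_eventuallyEq hlog, ?_⟩
  rw [(laplacian_congr_nhds hlog).eq_of_nhds, hlogRN.laplacian_sub hlogE2,
    hlogR3.laplacian_add hlogN, laplacian_smul _ hlogR, laplacian_smul _ hlogE, hΔE.eq_of_nhds]
  simp only [smul_eq_mul, Pi.zero_apply, mul_zero, sub_zero]
  positivity

lemma not_isLocalMax_lineQuotient {q : ℂ × ℂ} (hR : ContDiff ℝ 2 R)
    (hΔ : ∀ v, 0 ≤ lineLaplacian R q v) (hpos : 0 < lineQuotient R s q)
    (hradial : fderiv ℝ R q q ≠ 0) : ¬ IsLocalMax (lineQuotient R s) q := by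
  intro hmax
  obtain ⟨v, hv, hqv⟩ := exists_transversal_complex_line_le_ker (fderiv ℝ R q) hradial
  obtain ⟨hsmooth, hΔpos⟩ :=
    contDiffAt_and_laplacian_pos_log_lineQuotient hR hpos hv hqv (hΔ v)
  have hlogmax : IsLocalMax (fun z => Real.log (lineQuotient R s z)) (q + (0 : ℂ) • v) := by
    rw [zero_smul, add_zero]
    filter_upwards [hmax, eventually_lineQuotient_pos hR.continuous.continuousAt hpos] with z hz hz'
    exact Real.log_le_log hz' hz
  have hline : ContinuousAt (fun w : ℂ => q + w • v) 0 := by fun_prop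
  have hlinemax : IsLocalMax (fun w : ℂ => Real.log (lineQuotient R s (q + w • v))) 0 :=
    hlogmax.comp_continuous (g := fun w : ℂ => q + w • v) hline
  exact (laplacian_nonpos_of_isLocalMax hlinemax hsmooth).not_gt hΔpos

lemma eq_zero_of_vanishes_on_lines {m : ℕ} (hm : m ≠ 0) (hR : ContDiff ℝ 2 R)
    (hΔ : ∀ z v, 0 ≤ lineLaplacian R z v) (hnonneg : ∀ z, 0 ≤ R z)
    (hhom : HomogeneousDeg R (2 * m)) (hs : s.card = 3 * m + 1)
    (hvanish : ∀ a ∈ s, ∀ w, R (a * w, w) = 0) : R = 0 := by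
  obtain ⟨q, hq, hmax⟩ := exists_isMaxOn_of_scaleInvariant
    (fun z hz => (continuousAt_lineQuotient (hR.of_le one_le_two).contDiffAt hvanish
      hz).continuousWithinAt) fun t ht z => lineQuotient_smul hhom hs ht z
  have hRE {z : ℂ × ℂ} (hz : R z ≠ 0) : lineProd s z ≠ 0 := fun h => hz <| by
    obtain ⟨a, ha, hza⟩ := lineProd_eq_zero_iff.1 h
    rw [hza, hvanish a ha]
  have hlines : lineProd s 0 = 0 := by
    obtain ⟨a, ha⟩ := Finset.card_pos.1 (by omega : 0 < s.card)
    exact lineProd_eq_zero_iff.2 ⟨a, ha, Prod.ext (by simp) rfl⟩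
  by_contra! hne
  obtain ⟨y, hy⟩ := Function.ne_iff.1 hne
  have hy0 : y ≠ 0 := fun h => hRE hy (h ▸ hlines)
  have hpos : 0 < lineQuotient R s q :=
    (lineQuotient_pos_iff.2 ⟨(hnonneg y).lt_of_ne' hy, hy0, hRE hy⟩).trans_le (hmax hy0)
  have hradial : fderiv ℝ R q q ≠ 0 := by
    rw [fderiv_self_of_homogeneous (hR.differentiable two_ne_zero q) fun t ht => hhom t ht q]
    simp [hm, (lineQuotient_pos_iff.1 hpos).1.ne']
  exact not_isLocalMax_lineQuotient hR (hΔ q) hpos hradial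
    (hmax.isLocalMax (isOpen_compl_singleton.mem_nhds hq))

end LineProduct

section HarmonicLines

variable {P : ℂ × ℂ → ℝ} {n : ℕ} {ω : ℂ} {S : ℕ → ℂ × ℂ → ℝ}

lemma IsRotationDecomposition.homogeneousDeg (h : IsRotationDecomposition P n ω S) (m : ℕ) :
    HomogeneousDeg (S m) (2 * m) := fun t _ z => by
  have := h.map_smul m t z
  rwa [norm_real, Real.norm_eq_abs, sq_abs, ← pow_mul, coe_smul] at this

lemma IsRotationDecomposition.eq_zero_of_infinite_setOf_isHarmonic
    (h : IsRotationDecomposition P n ω S) (hP : ContDiff ℝ 2 P)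
    (hpsh : ∀ z v, 0 ≤ lineLaplacian P z v)
    (hinf : {ζ : ℂ | IsHarmonic fun w => P (ζ * w, w)}.Infinite) :
    ∀ m < n, m ≠ 0 → S m = 0 := by
  intro m
  induction m using Nat.strong_induction_on with | _ m ih =>
  intro hm hm0
  have hlow (z v : ℂ × ℂ) : ∀ j < m, lineLaplacian (S j) z v = 0 := by
    intro j hj
    rcases eq_or_ne j 0 with rfl | hj0
    · exact h.lineLaplacian_zero z v
    · simp [ih j hj (hj.trans hm) hj0, lineLaplacian]
  have hΔ (z v : ℂ × ℂ) : 0 ≤ lineLaplacian (S m) z v :=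
    h.lineLaplacian_nonneg hP hpsh hm z v (hlow z v)
  have hnonneg (z : ℂ × ℂ) : 0 ≤ S m z := by
    have := hΔ z z
    rw [h.lineLaplacian_self] at this
    exact nonneg_of_mul_nonneg_right this (by positivity)
  obtain ⟨s, hs, hcard⟩ := hinf.exists_subset_card_eq (3 * m + 1)
  refine eq_zero_of_vanishes_on_lines hm0 (h.contDiff m) hΔ hnonneg (h.homogeneousDeg m) hcard
    fun a ha w => ?_
  have hline : IsHarmonic fun w => P (w • ((a, 1) : ℂ × ℂ)) := by
    simpa [mul_comm] using hs ha
  have hvanish := h.map_smul m w (a, 1)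
  rw [h.eq_zero_of_isHarmonic hP hline hm hm0, mul_zero] at hvanish
  simpa [mul_comm] using hvanish

theorem finitely_many_harmonic_lines_general (hpoly : IsRealPoly2 P) (hpsh : IsPsh P)
    (hnph : ¬ IsPluriharmonic P) :
    ({ζ : ℂ | IsHarmonic fun w => P (ζ * w, w)} ∪
      {ζ : ℂ | IsHarmonic (fun w => P (w, 0)) ∧ ζ = 0}).Finite := by
  refine Finite.union ?_ ((finite_singleton 0).subset fun ζ hζ => hζ.2)
  by_contra hinf
  have hP := hpoly.contDiff
  have hΔ := hpsh.lineLaplacian_nonneg hP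
  obtain ⟨n, ω, S, h⟩ := hpoly.exists_isRotationDecomposition
  have hS := h.eq_zero_of_infinite_setOf_isHarmonic hP hΔ hinf
  exact hnph <| isPluriharmonic_of_lineLaplacian_self_eq_zero hpoly fun z =>
    h.lineLaplacian_eq_zero hP hΔ hS z z

end HarmonicLines

/-- Proposition 1.1: a plurisubharmonic, non-pluriharmonic real
polynomial on `ℂ²`, homogeneous of degree `2k`, is harmonic along at most finitely
many complex lines through the origin. -/
theorem finitely_many_harmonic_lines (k : ℕ) (hk : 1 ≤ k) (P : ℂ × ℂ → ℝ)
    (hpoly : IsRealPoly2 P) (hpsh : IsPsh P) (hnph : ¬ IsPluriharmonic P)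
    (hhom : HomogeneousDeg P (2 * k)) :
    ({ζ : ℂ | IsHarmonic fun w => P (ζ * w, w)} ∪
      {ζ : ℂ | IsHarmonic (fun w => P (w, 0)) ∧ ζ = 0}).Finite := by
  exact finitely_many_harmonic_lines_general hpoly hpsh hnph

end
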